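/- There is an absolute constant C > 0 such that the following holds. Fix a vector x ∈ S^{d−1}, let Q_t be an ORA walk of length t on ℝ^d, and let t ≥ C d (log d)(log log d). Then P[ ‖Q_t x‖_∞ ≥ 10 √((log d)/d) ] ≤ d^{−2}. -/

import Mathlib

noncomputable section

open MeasureTheory Real
open scoped ENNReal

namespace KacJL

instance matrixMeasurableSpace {m n : Type*} : MeasurableSpace (Matrix m n ℝ) :=
  inferInstanceAs (MeasurableSpace (m → n → ℝ))

/-- The rotation by angle `θ` in the `(i,j)` coordinate plane of `ℝ^d`. -/
def rotM (d : ℕ) (i j : Fin d) (θ : ℝ) : Matrix (Fin d) (Fin d) ℝ :=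
  Matrix.of fun k l =>
    if k = i ∧ l = i then Real.cos θ
    else if k = i ∧ l = j then -Real.sin θ
    else if k = j ∧ l = i then Real.sin θ
    else if k = j ∧ l = j then Real.cos θ
    else if k = l then 1 else 0

/-- The uniform distribution on pairs of distinct coordinates in `Fin d`. -/
def pairUniform (d : ℕ) : Measure (Fin d × Fin d) :=
  ((d * (d - 1) : ℕ) : ℝ≥0∞)⁻¹ •
    (Measure.count.restrict {p : Fin d × Fin d | p.1 ≠ p.2})

/-- The product `R_{i_T,j_T,π/4} ⋯ R_{i_1,j_1,π/4}` of ORA rotations determined by the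
pairs `ω`. -/
def oraMatrix {d T : ℕ} (ω : Fin T → Fin d × Fin d) : Matrix (Fin d) (Fin d) ℝ :=
  ((List.ofFn fun t => rotM d (ω t).1 (ω t).2 (Real.pi / 4)).reverse).prod

/-!
Averaging a rotation of a coordinate pair with its mirror image removes the odd powers from an
even monomial. Up to a symmetrisation over the coordinates, one step of the walk therefore
replaces the exponents of an even monomial by a random redistribution of two of them. Weigh an
exponent `2n ≠ 0` by half the Gaussian moment `(2n)! / n!`. In dimension `d`, the mean total
weight then contracts by a factor `1 - 1 / (64 d)` in every step, except on the multilinear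
monomials in the squares, which Maclaurin's inequality bounds directly. Hence from a unit vector
with all `x i ^ 2 ≤ exp l / d`, a walk of `64 d q l` steps has `2q`-th moments of at most
`(2q / d) ^ q` on average over the coordinates, and Markov's inequality turns this into a bound on
the largest coordinate.

Using `q ≈ log d` from the start, where `l = log d`, would cost `d (log d) ^ 2` steps. Instead run
rounds with `q ≈ 8 log d / l`: each costs `O(d log d)` steps and replaces `l` by
`l / 2 + log log d + O(1)`. After `O(log log d)` rounds `l = O(log log d)`, and a last round with
`q ≈ log d` gives the threshold `√(log d / d)`.
-/

open scoped BigOperators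

section PairUpdate

variable {ι β M : Type*} [DecidableEq ι]

/-- The function `x` with its values at the distinct points `p.1` and `p.2` replaced by `v.1`
and `v.2`; it encodes a move that touches two coordinates only. -/
def updatePair (x : ι → β) (p : ι × ι) (v : β × β) : ι → β :=
  Function.update (Function.update x p.1 v.1) p.2 v.2

lemma updatePair_fst {p : ι × ι} (hp : p.1 ≠ p.2) (x : ι → β) (v : β × β) :
    updatePair x p v p.1 = v.1 := by
  simp [updatePair, hp]

lemma updatePair_snd (p : ι × ι) (x : ι → β) (v : β × β) : updatePair x p v p.2 = v.2 := by
  simp [updatePair]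

lemma updatePair_of_ne {p : ι × ι} {k : ι} (h₁ : k ≠ p.1) (h₂ : k ≠ p.2) (x : ι → β)
    (v : β × β) : updatePair x p v k = x k := by
  simp [updatePair, h₁, h₂]

lemma updatePair_swap {p : ι × ι} (hp : p.1 ≠ p.2) (x : ι → β) (v : β × β) :
    updatePair x p.swap v.swap = updatePair x p v :=
  Function.update_comm hp.symm _ _ _

lemma updatePair_comp_perm (σ : Equiv.Perm ι) (x : ι → β) (p : ι × ι) (v : β × β) :
    updatePair x (σ p.1, σ p.2) v ∘ σ = updatePair (x ∘ σ) p v := by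
  simp [updatePair, Function.update_comp_equiv]

variable [Fintype ι] [CommMonoid M]

@[to_additive]
lemma prod_eq_mul_mul_prod_compl {i j : ι} (h : i ≠ j) (f : ι → M) :
    ∏ k, f k = f i * f j * ∏ k ∈ ({i, j} : Finset ι)ᶜ, f k := by
  rw [← Finset.prod_mul_prod_compl {i, j}, Finset.prod_pair h]

@[to_additive]
lemma prod_updatePair {p : ι × ι} (hp : p.1 ≠ p.2) (F : ι → β → M) (x : ι → β) (v : β × β) :
    ∏ k, F k (updatePair x p v k) =
      F p.1 v.1 * F p.2 v.2 * ∏ k ∈ ({p.1, p.2} : Finset ι)ᶜ, F k (x k) := by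
  rw [prod_eq_mul_mul_prod_compl hp, updatePair_fst hp, updatePair_snd]
  congr 1
  refine Finset.prod_congr rfl fun k hk => ?_
  simp only [Finset.mem_compl, Finset.mem_insert, Finset.mem_singleton, not_or] at hk
  rw [updatePair_of_ne hk.1 hk.2]

end PairUpdate

section Operator

variable {ι : Type*} [DecidableEq ι]

/-- The rotation by `π / 4` in the plane of the coordinates `p.1` and `p.2`. -/
def eighthTurn (p : ι × ι) (x : ι → ℝ) : ι → ℝ :=
  updatePair x p ((x p.1 - x p.2) / √2, (x p.1 + x p.2) / √2)

lemma eighthTurn_comp_perm (σ : Equiv.Perm ι) (p : ι × ι) (x : ι → ℝ) :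
    eighthTurn (σ p.1, σ p.2) x ∘ σ = eighthTurn p (x ∘ σ) :=
  updatePair_comp_perm σ x p _

lemma eighthTurn_swap {p : ι × ι} (hp : p.1 ≠ p.2) (x : ι → ℝ) :
    eighthTurn p.swap x = updatePair x p ((x p.1 + x p.2) / √2, (x p.2 - x p.1) / √2) := by
  rw [eighthTurn, ← Prod.swap_prod_mk, updatePair_swap hp, Prod.fst_swap, Prod.snd_swap, add_comm]

variable [Fintype ι]

lemma sum_sq_eighthTurn {p : ι × ι} (hp : p.1 ≠ p.2) (x : ι → ℝ) :
    ∑ i, eighthTurn p x i ^ 2 = ∑ i, x i ^ 2 := by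
  rw [eighthTurn, sum_updatePair hp (fun _ a => a ^ 2) x, sum_eq_add_add_sum_compl hp]
  simp only [div_pow, Real.sq_sqrt zero_le_two]
  ring

/-- The transition operator of the ORA walk: `oraOperator ι f x` is the expectation of `f` after
one step of the walk from `x`. -/
def oraOperator (ι : Type*) [DecidableEq ι] [Fintype ι] : Module.End ℝ ((ι → ℝ) → ℝ) where
  toFun f x := 𝔼 p ∈ (Finset.univ : Finset ι).offDiag, f (eighthTurn p x)
  map_add' _ _ := funext fun _ => Finset.expect_add_distrib _ _ _
  map_smul' _ _ := funext fun _ => (Finset.mul_expect _ _ _).symm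

lemma oraOperator_apply (f : (ι → ℝ) → ℝ) (x : ι → ℝ) :
    oraOperator ι f x = 𝔼 p ∈ (Finset.univ : Finset ι).offDiag, f (eighthTurn p x) :=
  rfl

lemma oraOperator_pow_succ_apply (t : ℕ) (f : (ι → ℝ) → ℝ) (x : ι → ℝ) :
    (oraOperator ι ^ (t + 1)) f x =
      𝔼 p ∈ (Finset.univ : Finset ι).offDiag, (oraOperator ι ^ t) f (eighthTurn p x) := by
  rw [pow_succ', Module.End.mul_apply, oraOperator_apply]

lemma oraOperator_pow_mono {f g : (ι → ℝ) → ℝ} {r : ℝ}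
    (hfg : ∀ y, ∑ i, y i ^ 2 = r → f y ≤ g y) (t : ℕ) {x : ι → ℝ} (hx : ∑ i, x i ^ 2 = r) :
    (oraOperator ι ^ t) f x ≤ (oraOperator ι ^ t) g x := by
  induction t generalizing x with
  | zero => exact hfg x hx
  | succ t ih =>
    simp only [oraOperator_pow_succ_apply]
    refine Finset.expect_le_expect fun p hp => ih ?_
    rw [sum_sq_eighthTurn (Finset.mem_offDiag.1 hp).2.2, hx]

omit [DecidableEq ι] in
lemma univ_offDiag_nonempty [Nontrivial ι] : (Finset.univ : Finset ι).offDiag.Nonempty :=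
  let ⟨i, j, hij⟩ := exists_pair_ne ι
  ⟨(i, j), by simp [hij]⟩

lemma oraOperator_pow_const [Nontrivial ι] (t : ℕ) (c : ℝ) (x : ι → ℝ) :
    (oraOperator ι ^ t) (fun _ => c) x = c := by
  induction t generalizing x with
  | zero => rfl
  | succ t ih =>
    rw [oraOperator_pow_succ_apply, Finset.expect_congr rfl fun p _ => ih _]
    exact Finset.expect_const univ_offDiag_nonempty c

end Operator

section Weights

open Finset

/-- The factor `(2n)! / n!`, which is the `2n`-th moment of a centered Gaussian variable of
variance `2`. -/
def evenMoment (n : ℕ) : ℝ := ((2 * n).descFactorial n : ℕ)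

lemma evenMoment_zero : evenMoment 0 = 1 := by simp [evenMoment]

lemma evenMoment_mul_factorial (n : ℕ) :
    evenMoment n * n.factorial = (2 * n).factorial := by
  have h := Nat.factorial_mul_descFactorial (n := 2 * n) (k := n) (by omega)
  rw [show 2 * n - n = n by omega] at h
  rw [evenMoment, ← h]
  push_cast
  ring

lemma evenMoment_succ (n : ℕ) : evenMoment (n + 1) = 2 * (2 * n + 1) * evenMoment n := by
  have h := evenMoment_mul_factorial (n + 1)
  rw [show 2 * (n + 1) = 2 * n + 1 + 1 by ring, Nat.factorial_succ, Nat.factorial_succ,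
    Nat.factorial_succ] at h
  push_cast at h
  rw [← evenMoment_mul_factorial] at h
  have hne : ((n : ℝ) + 1) * n.factorial ≠ 0 := by positivity
  exact mul_right_cancel₀ hne (by linear_combination h)

lemma one_le_evenMoment (n : ℕ) : 1 ≤ evenMoment n := by
  induction n with
  | zero => exact evenMoment_zero.ge
  | succ n ih =>
    rw [evenMoment_succ]
    exact one_le_mul_of_one_le_of_one_le (by linarith [n.cast_nonneg (α := ℝ)]) ih

lemma evenMoment_le_pow (n : ℕ) : evenMoment n ≤ (2 * n) ^ n := by
  rw [evenMoment]
  exact_mod_cast Nat.descFactorial_le_pow (2 * n) n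

lemma choose_mul_evenMoment (a b : ℕ) :
    ((2 * (a + b)).choose (2 * a) : ℝ) * (evenMoment a * evenMoment b) =
      (a + b).choose a * evenMoment (a + b) := by
  have hne : (a.factorial * b.factorial : ℝ) ≠ 0 := by positivity
  apply mul_right_cancel₀ hne
  calc ((2 * (a + b)).choose (2 * a) : ℝ) * (evenMoment a * evenMoment b) *
        (a.factorial * b.factorial)
      = (2 * a + 2 * b).choose (2 * a) * (2 * a).factorial * (2 * b).factorial := by
        rw [← evenMoment_mul_factorial a, ← evenMoment_mul_factorial b, mul_add]
        ring
    _ = (2 * (a + b)).factorial := by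
        rw [mul_add, Nat.choose_symm_add]
        exact_mod_cast Nat.add_choose_mul_factorial_mul_factorial (2 * a) (2 * b)
    _ = evenMoment (a + b) * ((a + b).choose a * a.factorial * b.factorial) := by
        rw [← evenMoment_mul_factorial, Nat.choose_symm_add,
          ← Nat.add_choose_mul_factorial_mul_factorial a b]
        push_cast
        ring
    _ = (a + b).choose a * evenMoment (a + b) * (a.factorial * b.factorial) := by ring

lemma evenMoment_two_mul_le {b : ℕ} (hb : 1 ≤ b) :
    evenMoment (2 * b) ≤ 3 / 4 * 4 ^ b * evenMoment b ^ 2 := by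
  induction b, hb using Nat.le_induction with
  | base => norm_num [evenMoment, Nat.descFactorial]
  | succ b _ ih =>
    rw [show 2 * (b + 1) = 2 * b + 1 + 1 by ring, evenMoment_succ, evenMoment_succ,
      evenMoment_succ]
    push_cast
    calc 2 * (2 * (2 * (b : ℝ) + 1) + 1) * (2 * (2 * (2 * b) + 1) * evenMoment (2 * b))
        = 4 * ((4 * b + 3) * (4 * b + 1)) * evenMoment (2 * b) := by ring
      _ ≤ 4 * (4 * (2 * b + 1) ^ 2) * (3 / 4 * 4 ^ b * evenMoment b ^ 2) := by
        have := one_le_evenMoment (2 * b)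
        gcongr ?_ * ?_
        · nlinarith
      _ = 3 / 4 * 4 ^ (b + 1) * (2 * (2 * b + 1) * evenMoment b) ^ 2 := by ring

lemma evenMoment_add_le {a b : ℕ} (ha : 1 ≤ a) (hb : 1 ≤ b) :
    evenMoment (a + b) ≤ 3 / 4 * 2 ^ (a + b) * (evenMoment a * evenMoment b) := by
  wlog hba : b ≤ a generalizing a b
  · rw [add_comm a, mul_comm (evenMoment a)]
    exact this hb ha (by omega)
  have : 0 ≤ evenMoment b := by linarith [one_le_evenMoment b]
  induction a, hba using Nat.le_induction with
  | base =>
    refine (two_mul b ▸ evenMoment_two_mul_le hb).trans_eq ?_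
    rw [← two_mul, pow_mul]
    norm_num [sq]
  | succ a hba ih =>
    have hba' : (b : ℝ) ≤ a := by exact_mod_cast hba
    rw [show a + 1 + b = a + b + 1 by ring, evenMoment_succ, evenMoment_succ]
    push_cast
    calc 2 * (2 * ((a : ℝ) + b) + 1) * evenMoment (a + b)
        ≤ 2 * (2 * (2 * a + 1)) * (3 / 4 * 2 ^ (a + b) * (evenMoment a * evenMoment b)) := by
          gcongr
          · linarith [one_le_evenMoment (a + b)]
          · linarith
          · exact ih (hb.trans hba)
      _ = 3 / 4 * 2 ^ (a + b + 1) * (2 * (2 * a + 1) * evenMoment a * evenMoment b) := by ring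

/-- The weight of a coordinate carrying the exponent `2n` in the weighted count of monomials.
Halving the Gaussian moment for `n ≠ 0` makes every step of the walk decrease the weight on
average. -/
def weight (n : ℕ) : ℝ := if n = 0 then 1 else evenMoment n / 2

/-- The coefficient of `x ^ (2 * c.1) * y ^ (2 * c.2)` in the even part of
`((x + y) / √2) ^ (2 * (c.1 + c.2))`. -/
def splitCoeff (c : ℕ × ℕ) : ℝ := (2 * (c.1 + c.2)).choose (2 * c.1) / 2 ^ (c.1 + c.2)

/-- A bound for the relative change of the weight of two coordinates with exponents `2a` and
`2b` under the expansion of a monomial after an eighth turn. -/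
def splitExcess (a b : ℕ) : ℝ :=
  if a = 0 ∨ b = 0 then if 2 ≤ a + b then -(1 / 4) else 0 else 9 / 8 * 2 ^ (a + b)

lemma one_le_weight (n : ℕ) : 1 ≤ weight n := by
  rcases n with _ | n
  · simp [weight]
  · have h := one_le_evenMoment n
    rw [weight, if_neg n.succ_ne_zero, evenMoment_succ]
    nlinarith [n.cast_nonneg (α := ℝ)]

lemma splitCoeff_nonneg (c : ℕ × ℕ) : 0 ≤ splitCoeff c := by
  unfold splitCoeff
  positivity

lemma splitCoeff_mul_weight {a b : ℕ} (h : a + b ≠ 0) :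
    splitCoeff (a, b) * (weight a * weight b) =
      evenMoment (a + b) / (4 * 2 ^ (a + b)) *
        ((a + b).choose a + (if a = 0 then 1 else 0) + if b = 0 then 1 else 0) := by
  have hc := choose_mul_evenMoment a b
  rcases eq_or_ne a 0 with rfl | ha <;> rcases eq_or_ne b 0 with rfl | hb
  · simp at h
  · simp only [splitCoeff, weight, hb, if_true, if_false, zero_add, mul_zero, Nat.choose_zero_right,
      Nat.cast_one]
    ring
  · simp only [splitCoeff, weight, ha, if_true, if_false, add_zero, Nat.choose_self, Nat.cast_one]
    ring
  · simp only [splitCoeff, weight, ha, hb, if_false]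
    linear_combination hc / (4 * 2 ^ (a + b))

lemma sum_splitCoeff_mul_weight {n : ℕ} (hn : n ≠ 0) :
    ∑ c ∈ antidiagonal n, splitCoeff c * (weight c.1 * weight c.2) =
      (1 / 2 + 1 / 2 ^ n) * weight n := by
  have hterm : ∀ c ∈ antidiagonal n, splitCoeff c * (weight c.1 * weight c.2) =
      evenMoment n / (4 * 2 ^ n) *
        (n.choose c.1 + (if c.1 = 0 then 1 else 0) + if c.2 = 0 then 1 else 0) := by
    rintro ⟨a, b⟩ hc
    obtain rfl := mem_antidiagonal.1 hc
    exact splitCoeff_mul_weight hn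
  have hchoose : ∑ c ∈ antidiagonal n, (n.choose c.1 : ℝ) = 2 ^ n := by
    rw [Nat.sum_antidiagonal_eq_sum_range_succ_mk]
    exact_mod_cast Nat.sum_range_choose n
  have hfst : ∑ c ∈ antidiagonal n, (if c.1 = 0 then 1 else 0 : ℝ) = 1 := by
    rw [Nat.sum_antidiagonal_eq_sum_range_succ_mk]
    simp
  have hsnd : ∑ c ∈ antidiagonal n, (if c.2 = 0 then 1 else 0 : ℝ) = 1 := by
    rw [← Nat.sum_antidiagonal_swap]
    exact hfst
  rw [sum_congr rfl hterm, ← mul_sum, sum_add_distrib,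
    sum_add_distrib, hchoose, hfst, hsnd, weight, if_neg hn]
  field_simp
  ring

lemma sum_splitCoeff_mul_weight_le (a b : ℕ) :
    ∑ c ∈ antidiagonal (a + b), splitCoeff c * (weight c.1 * weight c.2) ≤
      (1 + splitExcess a b) * (weight a * weight b) := by
  rcases Nat.lt_or_ge (a + b) 2 with hab | hab
  · obtain ⟨rfl, rfl⟩ | ⟨rfl, rfl⟩ | ⟨rfl, rfl⟩ : (a = 0 ∧ b = 0) ∨ (a = 0 ∧ b = 1) ∨
      (a = 1 ∧ b = 0) := by omega
    · norm_num [splitCoeff, weight, splitExcess]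
    all_goals
      rw [sum_splitCoeff_mul_weight (by norm_num)]
      norm_num [splitExcess, weight]
  have hpow : (1 / 2 + 1 / 2 ^ (a + b) : ℝ) ≤ 3 / 4 := by
    have : (2 : ℝ) ^ 2 ≤ 2 ^ (a + b) := pow_le_pow_right₀ one_le_two hab
    have := one_div_le_one_div_of_le (by norm_num) this
    linarith
  rw [sum_splitCoeff_mul_weight (by omega)]
  by_cases h0 : a = 0 ∨ b = 0
  · have hw : weight (a + b) = weight a * weight b := by
      rcases h0 with rfl | rfl <;> simp [weight]
    rw [splitExcess, if_pos h0, if_pos hab, hw]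
    have := one_le_weight a
    have := one_le_weight b
    gcongr ?_ * _
    linarith
  · obtain ⟨ha, hb⟩ := not_or.1 h0
    have hw : weight (a + b) ≤ 3 / 2 * 2 ^ (a + b) * (weight a * weight b) := by
      have := evenMoment_add_le (Nat.one_le_iff_ne_zero.2 ha) (Nat.one_le_iff_ne_zero.2 hb)
      simp only [weight, ha, hb, if_false, show a + b ≠ 0 by omega]
      linarith
    have hw0 := one_le_mul_of_one_le_of_one_le (one_le_weight a) (one_le_weight b)
    calc (1 / 2 + 1 / 2 ^ (a + b)) * weight (a + b)
        ≤ 3 / 4 * (3 / 2 * 2 ^ (a + b) * (weight a * weight b)) := by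
          have := one_le_weight (a + b)
          gcongr
      _ ≤ (1 + splitExcess a b) * (weight a * weight b) := by
        rw [splitExcess, if_neg h0]
        linarith

end Weights

section Contraction

open Finset

variable {ι : Type*} [DecidableEq ι]

lemma four_mul_sq_le_two_pow (r : ℕ) : 4 * (r * r) ≤ 3 * 2 ^ r + 4 * r := by
  rcases Nat.lt_or_ge r 4 with hr | hr
  · interval_cases r <;> norm_num
  induction r, hr using Nat.le_induction with
  | base => norm_num
  | succ r hr ih =>
    rw [pow_succ]
    nlinarith

omit [DecidableEq ι] in
lemma sum_offDiag_two_pow_le (S : Finset ι) (α : ι → ℕ) (hα : ∀ i ∈ S, 1 ≤ α i) :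
    ∑ p ∈ S.offDiag, (2 : ℝ) ^ (α p.1 + α p.2) ≤ 3 * 2 ^ ∑ i ∈ S, α i := by
  classical
  have hterm : ∀ p ∈ S.offDiag,
      (2 : ℝ) ^ (α p.1 + α p.2) * 2 ^ #S ≤ 4 * 2 ^ ∑ i ∈ S, α i := by
    intro p hp
    obtain ⟨h₁, h₂, hne⟩ := mem_offDiag.1 hp
    have hsub : {p.1, p.2} ⊆ S := by simp [insert_subset_iff, h₁, h₂]
    have hcard : #(S \ {p.1, p.2}) + 2 = #S := by
      rw [← card_pair hne, card_sdiff_add_card_eq_card hsub]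
    have hsum : ∑ i ∈ S \ {p.1, p.2}, α i + (α p.1 + α p.2) = ∑ i ∈ S, α i := by
      rw [← sum_sdiff hsub, sum_pair hne]
    have hle : #(S \ {p.1, p.2}) ≤ ∑ i ∈ S \ {p.1, p.2}, α i := by
      simpa using card_nsmul_le_sum _ α 1 fun i hi => hα i (mem_sdiff.1 hi).1
    rw [show (4 : ℝ) = 2 ^ 2 by norm_num, ← pow_add, ← pow_add]
    exact pow_le_pow_right₀ one_le_two (by omega)
  have hcount : 4 * (#S.offDiag : ℝ) ≤ 3 * 2 ^ #S := by
    have : (4 * (#S * #S) : ℝ) ≤ 3 * 2 ^ #S + 4 * #S := by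
      exact_mod_cast four_mul_sq_le_two_pow #S
    rw [offDiag_card, Nat.cast_sub (Nat.le_mul_self _)]
    push_cast
    linarith
  refine le_of_mul_le_mul_right ?_ (show (0 : ℝ) < 2 ^ #S by positivity)
  calc (∑ p ∈ S.offDiag, (2 : ℝ) ^ (α p.1 + α p.2)) * 2 ^ #S
      ≤ #S.offDiag • (4 * 2 ^ ∑ i ∈ S, α i) := by
        rw [sum_mul]
        exact sum_le_card_nsmul _ _ _ hterm
    _ = 4 * #S.offDiag * 2 ^ ∑ i ∈ S, α i := by rw [nsmul_eq_mul]; ring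
    _ ≤ 3 * 2 ^ #S * 2 ^ ∑ i ∈ S, α i := by gcongr
    _ = 3 * (2 ^ ∑ i ∈ S, α i) * 2 ^ #S := by ring

lemma splitExcess_comm (a b : ℕ) : splitExcess a b = splitExcess b a := by
  simp only [splitExcess, or_comm, add_comm]

lemma splitExcess_zero_right_nonpos (a : ℕ) : splitExcess a 0 ≤ 0 := by
  unfold splitExcess
  split_ifs <;> norm_num at *

omit [DecidableEq ι] in
lemma sum_offDiag_splitExcess_le (S : Finset ι) (α : ι → ℕ) (hα : ∀ i ∈ S, 1 ≤ α i) :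
    ∑ p ∈ S.offDiag, splitExcess (α p.1) (α p.2) ≤ 27 / 8 * 2 ^ ∑ i ∈ S, α i := by
  have hterm : ∀ p ∈ S.offDiag, splitExcess (α p.1) (α p.2) = 9 / 8 * 2 ^ (α p.1 + α p.2) := by
    intro p hp
    obtain ⟨h₁, h₂, -⟩ := mem_offDiag.1 hp
    have h₁ := hα _ h₁
    have h₂ := hα _ h₂
    rw [splitExcess, if_neg (by omega)]
  rw [sum_congr rfl hterm, ← mul_sum]
  linarith [sum_offDiag_two_pow_le S α hα]

omit [DecidableEq ι] in
lemma sum_splitExcess_zero_right_le {S : Finset ι} {α : ι → ℕ} {i : ι} (hiS : i ∈ S)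
    (hi : 2 ≤ α i) : ∑ j ∈ S, splitExcess (α j) 0 ≤ -(1 / 4) := by
  classical
  calc ∑ j ∈ S, splitExcess (α j) 0
      ≤ splitExcess (α i) 0 := by
        rw [← add_sum_erase S _ hiS]
        linarith [sum_nonpos fun j (_ : j ∈ S.erase i) => splitExcess_zero_right_nonpos (α j)]
    _ = -(1 / 4) := by simp [splitExcess, hi]

lemma sum_offDiag_union {M : Type*} [AddCommMonoid M] {s t : Finset ι} (h : Disjoint s t)
    (f : ι × ι → M) :
    ∑ p ∈ (s ∪ t).offDiag, f p =
      ∑ p ∈ s.offDiag, f p + ∑ p ∈ t.offDiag, f p + ∑ j ∈ t, ∑ i ∈ s, (f (i, j) + f (j, i)) := by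
  rw [offDiag_union h, sum_union, sum_union, sum_union]
  · simp only [sum_add_distrib, sum_product]
    rw [sum_comm (s := s), add_assoc]
  all_goals
    rw [disjoint_left] at *
    simp only [mem_union, mem_offDiag, mem_product]
    grind

variable [Fintype ι]

omit [DecidableEq ι] in
lemma card_le_card_filter_zero_add_sum (α : ι → ℕ) :
    Fintype.card ι ≤ #{k | α k = 0} + ∑ k, α k := by
  rw [card_filter, ← sum_add_distrib, Fintype.card_eq_sum_ones]
  exact sum_le_sum fun k _ => by split_ifs <;> omega

omit [DecidableEq ι] in
lemma sum_splitExcess_le (α : ι → ℕ) {i : ι} (hi : 2 ≤ α i) :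
    ∑ p ∈ univ.offDiag, splitExcess (α p.1) (α p.2) ≤
      27 / 8 * 2 ^ (∑ k, α k) - (Fintype.card ι - ∑ k, α k) / 2 := by
  classical
  set S : Finset ι := {k | α k ≠ 0}
  set Z : Finset ι := {k | α k = 0}
  have hdisj : Disjoint S Z := (disjoint_filter_filter_not univ univ _).symm
  have hS : ∑ p ∈ S.offDiag, splitExcess (α p.1) (α p.2) ≤ 27 / 8 * 2 ^ ∑ k, α k := by
    rw [← sum_filter_ne_zero univ]
    exact sum_offDiag_splitExcess_le S α fun k hk =>
      Nat.one_le_iff_ne_zero.2 ((mem_filter_univ k).1 hk)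
  have hZ : ∑ p ∈ Z.offDiag, splitExcess (α p.1) (α p.2) ≤ 0 := by
    refine sum_nonpos fun p hp => ?_
    rw [(mem_filter_univ _).1 (mem_offDiag.1 hp).2.1]
    exact splitExcess_zero_right_nonpos _
  have hrow : ∑ k ∈ Z, ∑ j ∈ S, (splitExcess (α j) (α k) + splitExcess (α k) (α j)) ≤
      -(#Z / 2) := by
    have hterm : ∀ k ∈ Z,
        ∑ j ∈ S, (splitExcess (α j) (α k) + splitExcess (α k) (α j)) ≤ -(1 / 2) := by
      intro k hk
      have hiS : i ∈ S := (mem_filter_univ i).2 (by omega)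
      simp only [(mem_filter_univ k).1 hk, splitExcess_comm 0, sum_add_distrib]
      linarith [sum_splitExcess_zero_right_le hiS hi]
    refine (sum_le_sum hterm).trans_eq ?_
    rw [sum_const, nsmul_eq_mul]
    ring
  have hcard : (Fintype.card ι : ℝ) ≤ #Z + ∑ k, α k := by
    exact_mod_cast card_le_card_filter_zero_add_sum α
  have hunion : S ∪ Z = univ := by
    ext k
    simp [S, Z, em']
  rw [← hunion, sum_offDiag_union hdisj, hunion]
  linarith

/-- The average, over the pair of coordinates used by a step of the walk, of the value of `F` at
the exponents into which the step splits the exponent `α`. It bounds the action of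
`oraOperator` on symmetrised even monomials. -/
def splitMean (F : (ι → ℕ) → ℝ) (α : ι → ℕ) : ℝ :=
  𝔼 p ∈ univ.offDiag,
    ∑ c ∈ antidiagonal (α p.1 + α p.2), splitCoeff c * F (updatePair α p c)

lemma sum_updatePair_of_mem_antidiagonal {α : ι → ℕ} {p : ι × ι} (hp : p.1 ≠ p.2) {c : ℕ × ℕ}
    (hc : c ∈ antidiagonal (α p.1 + α p.2)) : ∑ k, updatePair α p c k = ∑ k, α k := by
  rw [sum_updatePair hp (fun _ n => n), sum_eq_add_add_sum_compl hp, mem_antidiagonal.1 hc]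

lemma splitMean_mono {F G : (ι → ℕ) → ℝ} {α : ι → ℕ}
    (hFG : ∀ β : ι → ℕ, ∑ k, β k = ∑ k, α k → F β ≤ G β) : splitMean F α ≤ splitMean G α :=
  expect_le_expect fun _ hp => sum_le_sum fun _ hc => mul_le_mul_of_nonneg_left
    (hFG _ (sum_updatePair_of_mem_antidiagonal (mem_offDiag.1 hp).2.2 hc)) (splitCoeff_nonneg _)

/-- The product of the weights of the exponents in `α`. -/
def weightProd (α : ι → ℕ) : ℝ := ∏ k, weight (α k)

omit [DecidableEq ι] in
lemma one_le_weightProd (α : ι → ℕ) : 1 ≤ weightProd α :=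
  one_le_prod fun _ _ => one_le_weight _

lemma sum_splitCoeff_mul_weightProd_le {p : ι × ι} (hp : p.1 ≠ p.2) (α : ι → ℕ) :
    ∑ c ∈ antidiagonal (α p.1 + α p.2), splitCoeff c * weightProd (updatePair α p c) ≤
      (1 + splitExcess (α p.1) (α p.2)) * weightProd α := by
  set R := ∏ k ∈ ({p.1, p.2} : Finset ι)ᶜ, weight (α k)
  have hR : 0 ≤ R := prod_nonneg fun k _ => zero_le_one.trans (one_le_weight _)
  have hupdate (c : ℕ × ℕ) : weightProd (updatePair α p c) = weight c.1 * weight c.2 * R :=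
    prod_updatePair hp (fun _ => weight) α c
  have hα : weightProd α = weight (α p.1) * weight (α p.2) * R := prod_eq_mul_mul_prod_compl hp _
  simp only [hupdate, hα, ← mul_assoc, ← sum_mul]
  refine mul_le_mul_of_nonneg_right ?_ hR
  simpa only [mul_assoc] using sum_splitCoeff_mul_weight_le (α p.1) (α p.2)

lemma splitMean_weightProd_le {α : ι → ℕ} {i : ι} (hi : 2 ≤ α i)
    (hcard : 2 ^ (∑ k, α k + 3) ≤ Fintype.card ι) :
    splitMean weightProd α ≤ (1 - 1 / (64 * Fintype.card ι)) * weightProd α := by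
  have hW := one_le_weightProd α
  set d := Fintype.card ι
  set q := ∑ k, α k
  have hd : (8 : ℝ) * 2 ^ q ≤ d := by exact_mod_cast (by rwa [pow_add, mul_comm] at hcard)
  have hq : (q : ℝ) ≤ 2 ^ q := by exact_mod_cast Nat.lt_two_pow_self.le
  have hq1 : (1 : ℝ) ≤ 2 ^ q := one_le_pow₀ one_le_two
  have hN : (#(univ : Finset ι).offDiag : ℝ) = d * (d - 1) := by
    rw [offDiag_card, Nat.cast_sub (Nat.le_mul_self _), card_univ]
    push_cast
    ring
  have hNpos : (0 : ℝ) < d * (d - 1) := by nlinarith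
  have hexcess : ∑ p ∈ univ.offDiag, splitExcess (α p.1) (α p.2) ≤ -(d / 64) := by
    linarith [sum_splitExcess_le α hi]
  rw [splitMean, expect_eq_sum_div_card, hN, div_le_iff₀ hNpos]
  calc ∑ p ∈ univ.offDiag, ∑ c ∈ antidiagonal (α p.1 + α p.2),
        splitCoeff c * weightProd (updatePair α p c)
      ≤ ∑ p ∈ univ.offDiag, (1 + splitExcess (α p.1) (α p.2)) * weightProd α :=
        sum_le_sum fun p hp => sum_splitCoeff_mul_weightProd_le (mem_offDiag.1 hp).2.2 α
    _ = (d * (d - 1) + ∑ p ∈ univ.offDiag, splitExcess (α p.1) (α p.2)) * weightProd α := by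
        rw [← sum_mul, sum_add_distrib, sum_const, nsmul_one, hN]
    _ ≤ (d * (d - 1) + -(d / 64)) * weightProd α := by gcongr
    _ ≤ (1 - 1 / (64 * d)) * weightProd α * (d * (d - 1)) := by
        have : (0 : ℝ) < d := by linarith
        field_simp
        nlinarith

end Contraction

section Monomials

open Finset

lemma add_pow_two_mul_add_sub_pow_two_mul {R : Type*} [CommRing R] (x y : R) (n : ℕ) :
    (x + y) ^ (2 * n) + (x - y) ^ (2 * n) =
      2 * ∑ c ∈ antidiagonal n, (2 * n).choose (2 * c.1) * (x ^ (2 * c.1) * y ^ (2 * c.2)) := by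
  have hodd : ∀ c ∈ antidiagonal (2 * n), c ∉ (fun c : ℕ × ℕ => (2 * c.1, 2 * c.2)) ''
      (antidiagonal n : Set (ℕ × ℕ)) → ((2 * n).choose c.1 : R) * (x ^ c.1 * y ^ c.2) +
        (2 * n).choose c.1 * (x ^ c.1 * (-y) ^ c.2) = 0 := by
    rintro ⟨a, b⟩ hc hmem
    have hb : Odd b := by
      rw [← Nat.not_even_iff_odd]
      rintro ⟨k, rfl⟩
      rw [HasAntidiagonal.mem_antidiagonal] at hc
      exact hmem ⟨(n - k, k), by simp; omega, by ext <;> simp <;> omega⟩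
    rw [hb.neg_pow]
    ring
  rw [sub_eq_add_neg, (Commute.all x y).add_pow', (Commute.all x (-y)).add_pow']
  simp only [nsmul_eq_mul]
  rw [← sum_add_distrib, mul_sum]
  refine (sum_of_injOn (fun c : ℕ × ℕ => (2 * c.1, 2 * c.2)) ?_ ?_ hodd ?_).symm
  · intro c _ c' _ h
    simpa [Prod.ext_iff] using h
  · intro c hc
    simp only [mem_coe, HasAntidiagonal.mem_antidiagonal] at hc ⊢
    omega
  · intro c _
    rw [(even_two_mul c.2).neg_pow]
    ring

lemma pow_mul_pow_add_pow_mul_pow_le {A B : ℝ} (hA : 0 ≤ A) (hB : 0 ≤ B) (a b : ℕ) :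
    A ^ a * B ^ b + B ^ a * A ^ b ≤ A ^ (a + b) + B ^ (a + b) := by
  have h : 0 ≤ (A ^ a - B ^ a) * (A ^ b - B ^ b) := by
    rcases le_total A B with h | h
    · exact mul_nonneg_of_nonpos_of_nonpos (sub_nonpos.2 (by gcongr)) (sub_nonpos.2 (by gcongr))
    · exact mul_nonneg (sub_nonneg.2 (by gcongr)) (sub_nonneg.2 (by gcongr))
  rw [pow_add, pow_add]
  linarith

lemma expect_offDiag_swap {ι M : Type*} [AddCommMonoid M] [Module ℚ≥0 M] (s : Finset ι)
    (f : ι × ι → M) : 𝔼 p ∈ s.offDiag, f p.swap = 𝔼 p ∈ s.offDiag, f p :=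
  expect_equiv (Equiv.prodComm ι ι) (by simp [and_left_comm, ne_comm]) fun _ _ => rfl

variable {ι : Type*} [Fintype ι]

lemma expect_offDiag_perm {M : Type*} [AddCommMonoid M] [Module ℚ≥0 M] (σ : Equiv.Perm ι)
    (f : ι × ι → M) : 𝔼 p ∈ univ.offDiag, f (σ p.1, σ p.2) = 𝔼 p ∈ univ.offDiag, f p :=
  expect_equiv (σ.prodCongr σ) (by simp) fun _ _ => rfl

/-- The monomial with all exponents even, where `α` lists the half exponents. -/
def evenMonomial (α : ι → ℕ) (x : ι → ℝ) : ℝ := ∏ k, x k ^ (2 * α k)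

variable [DecidableEq ι]

/-- The symmetrisation of `f`: its mean over all permutations of the coordinates. -/
def permMean (f : (ι → ℝ) → ℝ) (x : ι → ℝ) : ℝ := 𝔼 σ : Equiv.Perm ι, f (x ∘ σ)

lemma evenMonomial_updatePair_div_sqrt_two {p : ι × ι} (hp : p.1 ≠ p.2) (α : ι → ℕ) (x : ι → ℝ)
    (r s : ℝ) : evenMonomial α (updatePair x p (r / √2, s / √2)) =
      (r ^ 2) ^ α p.1 * (s ^ 2) ^ α p.2 / 2 ^ (α p.1 + α p.2) *
        ∏ k ∈ ({p.1, p.2} : Finset ι)ᶜ, x k ^ (2 * α k) := by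
  rw [evenMonomial, prod_updatePair hp (fun k y => y ^ (2 * α k))]
  simp only [pow_mul, div_pow, Real.sq_sqrt zero_le_two, pow_add, div_mul_div_comm]

lemma evenMonomial_eighthTurn_add_le {p : ι × ι} (hp : p.1 ≠ p.2) (α : ι → ℕ) (x : ι → ℝ) :
    evenMonomial α (eighthTurn p x) + evenMonomial α (eighthTurn p.swap x) ≤
      2 * ∑ c ∈ antidiagonal (α p.1 + α p.2), splitCoeff c * evenMonomial (updatePair α p c) x := by
  set a := α p.1
  set b := α p.2
  set u := x p.1
  set v := x p.2
  set R := ∏ k ∈ ({p.1, p.2} : Finset ι)ᶜ, x k ^ (2 * α k)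
  have hR : 0 ≤ R := prod_nonneg fun k _ => (even_two_mul _).pow_nonneg _
  have hupdate (c : ℕ × ℕ) : evenMonomial (updatePair α p c) x =
      u ^ (2 * c.1) * v ^ (2 * c.2) * R :=
    prod_updatePair hp (fun k n => x k ^ (2 * n)) α c
  have hsplit : ∑ c ∈ antidiagonal (a + b), splitCoeff c * (u ^ (2 * c.1) * v ^ (2 * c.2) * R) =
      (((u + v) ^ 2) ^ (a + b) + ((u - v) ^ 2) ^ (a + b)) / 2 / 2 ^ (a + b) * R := by
    rw [← pow_mul, ← pow_mul, add_pow_two_mul_add_sub_pow_two_mul,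
      mul_div_cancel_left₀ _ two_ne_zero, sum_div, sum_mul]
    refine sum_congr rfl fun c hc => ?_
    rw [splitCoeff, mem_antidiagonal.1 hc]
    ring
  have := pow_mul_pow_add_pow_mul_pow_le (sq_nonneg (u - v)) (sq_nonneg (u + v)) a b
  rw [eighthTurn_swap hp, eighthTurn, evenMonomial_updatePair_div_sqrt_two hp,
    evenMonomial_updatePair_div_sqrt_two hp, sub_sq_comm v u]
  simp only [hupdate, hsplit]
  calc ((u - v) ^ 2) ^ a * ((u + v) ^ 2) ^ b / 2 ^ (a + b) * R +
        ((u + v) ^ 2) ^ a * ((u - v) ^ 2) ^ b / 2 ^ (a + b) * R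
      = (((u - v) ^ 2) ^ a * ((u + v) ^ 2) ^ b + ((u + v) ^ 2) ^ a * ((u - v) ^ 2) ^ b) /
          2 ^ (a + b) * R := by ring
    _ ≤ (((u - v) ^ 2) ^ (a + b) + ((u + v) ^ 2) ^ (a + b)) / 2 ^ (a + b) * R := by gcongr
    _ = _ := by ring

lemma oraOperator_evenMonomial_le (α : ι → ℕ) (x : ι → ℝ) :
    oraOperator ι (evenMonomial α) x ≤ splitMean (fun β => evenMonomial β x) α := by
  have hswap := expect_offDiag_swap univ fun p => evenMonomial α (eighthTurn p x)
  have hsum : 𝔼 p ∈ univ.offDiag,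
      (evenMonomial α (eighthTurn p x) + evenMonomial α (eighthTurn p.swap x)) ≤
        2 * splitMean (fun β => evenMonomial β x) α := by
    rw [splitMean, mul_expect]
    exact expect_le_expect fun p hp =>
      evenMonomial_eighthTurn_add_le (mem_offDiag.1 hp).2.2 α x
  rw [expect_add_distrib, hswap] at hsum
  rw [oraOperator_apply]
  linarith

lemma oraOperator_permMean (f : (ι → ℝ) → ℝ) :
    oraOperator ι (permMean f) = permMean (oraOperator ι f) := by
  ext x
  simp only [oraOperator_apply, permMean]
  rw [expect_comm]
  refine expect_congr rfl fun σ _ => ?_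
  rw [← expect_offDiag_perm σ]
  simp only [eighthTurn_comp_perm]

lemma permMean_splitMean (g : (ι → ℕ) → (ι → ℝ) → ℝ) (α : ι → ℕ) (x : ι → ℝ) :
    permMean (fun y => splitMean (fun β => g β y) α) x =
      splitMean (fun β => permMean (g β) x) α := by
  simp only [permMean, splitMean]
  rw [expect_comm]
  simp only [expect_sum_comm, mul_expect]

lemma oraOperator_pow_splitMean (g : (ι → ℕ) → (ι → ℝ) → ℝ) (α : ι → ℕ) (t : ℕ) (x : ι → ℝ) :
    (oraOperator ι ^ t) (fun y => splitMean (fun β => g β y) α) x =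
      splitMean (fun β => (oraOperator ι ^ t) (g β) x) α := by
  induction t generalizing x with
  | zero => rfl
  | succ t ih =>
    simp only [oraOperator_pow_succ_apply, ih]
    simp only [splitMean]
    rw [expect_comm]
    simp only [expect_sum_comm, mul_expect]

lemma oraOperator_permMean_evenMonomial_le (α : ι → ℕ) (x : ι → ℝ) :
    oraOperator ι (permMean (evenMonomial α)) x ≤
      splitMean (fun β => permMean (evenMonomial β) x) α := by
  rw [oraOperator_permMean, ← permMean_splitMean]
  exact expect_le_expect fun σ _ => oraOperator_evenMonomial_le α _

end Monomials

section Maclaurin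

open Finset

variable {ι : Type*} [Fintype ι] [DecidableEq ι]

lemma expect_perm_mul_swap (f : Equiv.Perm ι → ℝ) (i k : ι) :
    𝔼 σ, f (σ * Equiv.swap i k) = 𝔼 σ, f σ :=
  Fintype.expect_equiv (Equiv.mulRight (Equiv.swap i k)) _ _ fun _ => rfl

variable {z : ι → ℝ}

lemma expect_perm_prod_insert_le (hz : ∀ i, 0 ≤ z i) {S : Finset ι} {i : ι} (hi : i ∉ S) (k : ι) :
    𝔼 σ : Equiv.Perm ι, ∏ j ∈ insert i S, z (σ j) ≤
      𝔼 σ : Equiv.Perm ι, z (σ k) * ∏ j ∈ S, z (σ j) := by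
  by_cases hk : k ∈ S
  · have hP (σ : Equiv.Perm ι) : ∏ j ∈ S, z (σ j) = z (σ k) * ∏ j ∈ S.erase k, z (σ j) :=
      (mul_prod_erase S _ hk).symm
    have hswap : 𝔼 σ : Equiv.Perm ι, z (σ i) ^ 2 * ∏ j ∈ S.erase k, z (σ j) =
        𝔼 σ : Equiv.Perm ι, z (σ k) ^ 2 * ∏ j ∈ S.erase k, z (σ j) := by
      rw [← expect_perm_mul_swap _ i k]
      refine expect_congr rfl fun σ _ => ?_
      rw [Equiv.Perm.mul_apply, Equiv.swap_apply_left]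
      congr 1
      refine prod_congr rfl fun j hj => ?_
      have hji : j ≠ i := fun h => hi (h ▸ mem_of_mem_erase hj)
      rw [Equiv.Perm.mul_apply, Equiv.swap_apply_of_ne_of_ne hji (ne_of_mem_erase hj)]
    calc 𝔼 σ : Equiv.Perm ι, ∏ j ∈ insert i S, z (σ j)
        ≤ 𝔼 σ : Equiv.Perm ι, (z (σ i) ^ 2 * ∏ j ∈ S.erase k, z (σ j) +
            z (σ k) ^ 2 * ∏ j ∈ S.erase k, z (σ j)) / 2 := by
          refine expect_le_expect fun σ _ => ?_
          rw [prod_insert hi, hP]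
          have : 0 ≤ ∏ j ∈ S.erase k, z (σ j) := prod_nonneg fun j _ => hz _
          nlinarith [two_mul_le_add_sq (z (σ i)) (z (σ k))]
      _ = 𝔼 σ : Equiv.Perm ι, z (σ k) ^ 2 * ∏ j ∈ S.erase k, z (σ j) := by
          rw [← expect_div, expect_add_distrib, hswap, add_self_div_two]
      _ = 𝔼 σ : Equiv.Perm ι, z (σ k) * ∏ j ∈ S, z (σ j) := by simp only [hP, sq, mul_assoc]
  · rw [← expect_perm_mul_swap _ i k]
    refine expect_le_expect fun σ _ => ?_
    rw [prod_insert hi, Equiv.Perm.mul_apply, Equiv.swap_apply_left]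
    refine (congrArg _ (prod_congr rfl fun j hj => ?_)).le
    rw [Equiv.Perm.mul_apply, Equiv.swap_apply_of_ne_of_ne (ne_of_mem_of_not_mem hj hi)
      (ne_of_mem_of_not_mem hj hk)]

lemma expect_perm_prod_le_pow (hz : ∀ i, 0 ≤ z i) (S : Finset ι) :
    𝔼 σ : Equiv.Perm ι, ∏ j ∈ S, z (σ j) ≤ (𝔼 i, z i) ^ #S := by
  induction S using Finset.induction_on with
  | empty => simp
  | insert i S hi ih =>
    have : Nonempty ι := ⟨i⟩
    calc 𝔼 σ : Equiv.Perm ι, ∏ j ∈ insert i S, z (σ j)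
        ≤ 𝔼 k, 𝔼 σ : Equiv.Perm ι, z (σ k) * ∏ j ∈ S, z (σ j) :=
          le_expect univ_nonempty fun k _ => expect_perm_prod_insert_le hz hi k
      _ = 𝔼 σ : Equiv.Perm ι, (𝔼 k, z k) * ∏ j ∈ S, z (σ j) := by
          rw [expect_comm]
          refine expect_congr rfl fun σ _ => ?_
          rw [← expect_mul, Fintype.expect_equiv σ (fun k => z (σ k)) z fun _ => rfl]
      _ ≤ (𝔼 i, z i) * (𝔼 i, z i) ^ #S := by
          rw [← mul_expect]
          exact mul_le_mul_of_nonneg_left ih (expect_nonneg fun i _ => hz i)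
      _ = (𝔼 i, z i) ^ #(insert i S) := by rw [card_insert_of_notMem hi, pow_succ']

lemma permMean_evenMonomial_le_of_le_one {α : ι → ℕ} (hα : ∀ k, α k ≤ 1) (x : ι → ℝ) :
    permMean (evenMonomial α) x ≤ (𝔼 i, x i ^ 2) ^ ∑ k, α k := by
  set S : Finset ι := {k | α k = 1}
  have hS : #S = ∑ k, α k := by
    rw [card_filter]
    exact sum_congr rfl fun k _ => by have := hα k; split_ifs <;> omega
  have hmono (y : ι → ℝ) : evenMonomial α y = ∏ k ∈ S, y k ^ 2 := by
    rw [evenMonomial, prod_filter]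
    refine prod_congr rfl fun k _ => ?_
    rcases Nat.le_one_iff_eq_zero_or_eq_one.1 (hα k) with h | h <;> simp [h]
  simp only [permMean, hmono, ← hS]
  exact expect_perm_prod_le_pow (fun i => sq_nonneg (x i)) S

end Maclaurin

section MomentBound

open Finset

variable {ι : Type*} [Fintype ι] [DecidableEq ι]

lemma permMean_evenMonomial_le_pow {x : ι → ℝ} {m : ℝ} (hx : ∀ i, x i ^ 2 ≤ m) (α : ι → ℕ) :
    permMean (evenMonomial α) x ≤ m ^ ∑ k, α k := by
  refine expect_le univ_nonempty fun σ _ => ?_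
  rw [evenMonomial, ← prod_pow_eq_pow_sum]
  refine prod_le_prod (fun k _ => (even_two_mul _).pow_nonneg _) fun k _ => ?_
  rw [pow_mul]
  exact pow_le_pow_left₀ (sq_nonneg _) (hx _) _

lemma oraOperator_pow_permMean_evenMonomial_le_of_le_one [Nontrivial ι] {x : ι → ℝ}
    (hx : ∑ i, x i ^ 2 = 1) {α : ι → ℕ} (hα : ∀ k, α k ≤ 1) (t : ℕ) :
    (oraOperator ι ^ t) (permMean (evenMonomial α)) x ≤ 1 / Fintype.card ι ^ ∑ k, α k := by
  rw [← oraOperator_pow_const t (1 / (Fintype.card ι : ℝ) ^ ∑ k, α k) x]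
  refine oraOperator_pow_mono (fun y hy => ?_) t hx
  rw [← one_div_pow, ← hy, ← Fintype.expect_eq_sum_div_card]
  exact permMean_evenMonomial_le_of_le_one hα y

lemma oraOperator_pow_succ_permMean_evenMonomial_le (α : ι → ℕ) (t : ℕ) (x : ι → ℝ) :
    (oraOperator ι ^ (t + 1)) (permMean (evenMonomial α)) x ≤
      splitMean (fun β => (oraOperator ι ^ t) (permMean (evenMonomial β)) x) α := by
  rw [pow_succ, Module.End.mul_apply, ← oraOperator_pow_splitMean]
  exact oraOperator_pow_mono (fun y _ => oraOperator_permMean_evenMonomial_le α y) t rfl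

lemma oraOperator_pow_succ_permMean_evenMonomial_le_of_two_le {α : ι → ℕ} {i : ι} (hi : 2 ≤ α i)
    (hcard : 2 ^ (∑ k, α k + 3) ≤ Fintype.card ι) {t : ℕ} {x : ι → ℝ} {M : ℝ} (hM : 0 ≤ M)
    (h : ∀ β : ι → ℕ, ∑ k, β k = ∑ k, α k →
      (oraOperator ι ^ t) (permMean (evenMonomial β)) x ≤ M * weightProd β) :
    (oraOperator ι ^ (t + 1)) (permMean (evenMonomial α)) x ≤
      M * ((1 - 1 / (64 * Fintype.card ι)) * weightProd α) := by
  calc (oraOperator ι ^ (t + 1)) (permMean (evenMonomial α)) x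
      ≤ splitMean (fun β => (oraOperator ι ^ t) (permMean (evenMonomial β)) x) α :=
        oraOperator_pow_succ_permMean_evenMonomial_le α t x
    _ ≤ splitMean (fun β => M * weightProd β) α := splitMean_mono h
    _ = M * splitMean weightProd α := by
        simp only [splitMean, mul_expect, mul_sum, mul_left_comm]
    _ ≤ M * ((1 - 1 / (64 * Fintype.card ι)) * weightProd α) := by
        gcongr
        exact splitMean_weightProd_le hi hcard

lemma oraOperator_pow_permMean_evenMonomial_le {x : ι → ℝ} {b : ℝ} (hx : ∑ i, x i ^ 2 = 1)
    (hb : ∀ i, x i ^ 2 ≤ b / Fintype.card ι) (t : ℕ) {q : ℕ}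
    (hcard : 2 ^ (q + 3) ≤ Fintype.card ι) {α : ι → ℕ} (hα : ∑ k, α k = q) :
    (oraOperator ι ^ t) (permMean (evenMonomial α)) x ≤
      (1 + b ^ q * (1 - 1 / (64 * Fintype.card ι)) ^ t) / Fintype.card ι ^ q * weightProd α := by
  set d := Fintype.card ι
  set θ : ℝ := 1 - 1 / (64 * d)
  have hd : 2 ^ 3 ≤ d := (Nat.pow_le_pow_right two_pos (Nat.le_add_left 3 q)).trans hcard
  have : Nontrivial ι := Fintype.one_lt_card_iff_nontrivial.1 (by omega)
  have hd1 : (1 : ℝ) ≤ d := by exact_mod_cast (by omega)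
  have hd0 : (0 : ℝ) < d := by linarith
  have : 0 ≤ b := by
    obtain ⟨i⟩ : Nonempty ι := inferInstance
    simpa [hd0.ne'] using mul_nonneg ((sq_nonneg _).trans (hb i)) hd0.le
  have hθ1 : θ ≤ 1 := sub_le_self _ (by positivity)
  have hθ0 : 0 ≤ θ := sub_nonneg.2 <| (div_le_one (by positivity)).2 (by linarith)
  induction t generalizing α with
  | zero =>
    calc permMean (evenMonomial α) x ≤ b ^ q / d ^ q * 1 := by
          rw [mul_one, ← div_pow, ← hα]
          exact permMean_evenMonomial_le_pow hb α
      _ ≤ (1 + b ^ q * θ ^ 0) / d ^ q * weightProd α := by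
          gcongr
          · linarith
          · exact one_le_weightProd α
  | succ t ih =>
    by_cases hflat : ∀ k, α k ≤ 1
    · calc (oraOperator ι ^ (t + 1)) (permMean (evenMonomial α)) x
          ≤ 1 / d ^ q * 1 := by
            rw [mul_one, ← hα]
            exact oraOperator_pow_permMean_evenMonomial_le_of_le_one hx hflat (t + 1)
        _ ≤ (1 + b ^ q * θ ^ (t + 1)) / d ^ q * weightProd α := by
            gcongr
            · exact le_add_of_nonneg_right (by positivity)
            · exact one_le_weightProd α
    · obtain ⟨i, hi⟩ := not_forall.1 hflat
      calc (oraOperator ι ^ (t + 1)) (permMean (evenMonomial α)) x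
          ≤ (1 + b ^ q * θ ^ t) / d ^ q * (θ * weightProd α) :=
            oraOperator_pow_succ_permMean_evenMonomial_le_of_two_le (Nat.lt_of_not_le hi)
              (hα ▸ hcard) (by positivity) fun β hβ => ih (hβ.trans hα)
        _ = (θ + b ^ q * θ ^ (t + 1)) / d ^ q * weightProd α := by ring
        _ ≤ (1 + b ^ q * θ ^ (t + 1)) / d ^ q * weightProd α := by
            have := one_le_weightProd α
            gcongr

end MomentBound

section Walk

open Finset

variable {ι : Type*} [Fintype ι] [DecidableEq ι]

/-- The probability that the ORA walk started at `x` is in `s` after `t` steps. -/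
def walkProb (t : ℕ) (s : Set (ι → ℝ)) (x : ι → ℝ) : ℝ :=
  (oraOperator ι ^ t) (s.indicator 1) x

/-- The vectors having a coordinate whose square is at least `c` times the average `1 / d` of the
squared coordinates of a unit vector. -/
def peaked (ι : Type*) [Fintype ι] (c : ℝ) : Set (ι → ℝ) :=
  {y | ∃ i, c / Fintype.card ι ≤ y i ^ 2}

lemma walkProb_add_le [Nontrivial ι] {A B : Set (ι → ℝ)} {p r : ℝ} (hp : 0 ≤ p) {t : ℕ}
    (hB : ∀ y ∉ A, ∑ i, y i ^ 2 = r → walkProb t B y ≤ p) (s : ℕ) {x : ι → ℝ}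
    (hx : ∑ i, x i ^ 2 = r) : walkProb (s + t) B x ≤ walkProb s A x + p := by
  have hstep : ∀ y, ∑ i, y i ^ 2 = r → walkProb t B y ≤
      (A.indicator 1 + fun _ => p : (ι → ℝ) → ℝ) y := by
    intro y hy
    by_cases hA : y ∈ A
    · have hone := oraOperator_pow_mono (f := B.indicator 1) (g := fun _ => 1) (r := r)
        (fun z _ => Set.indicator_le_self' (fun _ _ => zero_le_one) z) t hy
      rw [oraOperator_pow_const] at hone
      simpa [walkProb, hA] using hone.trans (le_add_of_nonneg_right hp)
    · simpa [hA] using hB y hA hy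
  calc walkProb (s + t) B x = (oraOperator ι ^ s) (walkProb t B) x := by
        rw [walkProb, pow_add]
        rfl
    _ ≤ (oraOperator ι ^ s) (A.indicator 1 + fun _ => p) x := oraOperator_pow_mono hstep s hx
    _ = walkProb s A x + p := by rw [map_add, Pi.add_apply, oraOperator_pow_const, walkProb]

lemma walkProb_eq_zero {s : Set (ι → ℝ)} {r : ℝ} (hs : ∀ y, ∑ i, y i ^ 2 = r → y ∉ s) (t : ℕ)
    {x : ι → ℝ} (hx : ∑ i, x i ^ 2 = r) : walkProb t s x = 0 := by
  have hind : ∀ y, ∑ i, y i ^ 2 = r → s.indicator 1 y = (0 : (ι → ℝ) → ℝ) y := fun y hy =>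
    Set.indicator_of_notMem (hs y hy) _
  rw [walkProb]
  refine ((oraOperator_pow_mono (fun y hy => (hind y hy).le) t hx).antisymm
    (oraOperator_pow_mono (fun y hy => (hind y hy).ge) t hx)).trans ?_
  rw [map_zero, Pi.zero_apply]

omit [DecidableEq ι] in
lemma indicator_peaked_le {c : ℝ} (hc : 0 < c) (q : ℕ) (y : ι → ℝ) :
    (peaked ι c).indicator 1 y ≤ (Fintype.card ι / c) ^ q * ∑ i, y i ^ (2 * q) := by
  have hterm : ∀ i, 0 ≤ y i ^ (2 * q) := fun i => (even_two_mul q).pow_nonneg _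
  refine Set.indicator_apply_le' ?_ fun _ =>
    mul_nonneg (by positivity) (sum_nonneg fun i _ => hterm i)
  rintro ⟨i, hi⟩
  have : Nonempty ι := ⟨i⟩
  have hd : (0 : ℝ) < Fintype.card ι := by exact_mod_cast Fintype.card_pos
  calc (1 : ℝ) = (Fintype.card ι / c) ^ q * (c / Fintype.card ι) ^ q := by
        rw [← mul_pow, div_mul_div_cancel₀ hc.ne', div_self hd.ne', one_pow]
    _ ≤ (Fintype.card ι / c) ^ q * y i ^ (2 * q) := by
        rw [pow_mul]
        gcongr
    _ ≤ (Fintype.card ι / c) ^ q * ∑ i, y i ^ (2 * q) := by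
        gcongr
        exact single_le_sum (fun j _ => hterm j) (mem_univ i)

lemma sum_permMean_evenMonomial_single (q : ℕ) (y : ι → ℝ) :
    ∑ i, permMean (evenMonomial (Pi.single i q)) y = ∑ i, y i ^ (2 * q) := by
  have hmono (i : ι) (z : ι → ℝ) : evenMonomial (Pi.single i q) z = z i ^ (2 * q) := by
    rw [evenMonomial, prod_eq_single i (fun k _ hk => by simp [hk]) (by simp), Pi.single_eq_same]
  simp only [permMean, hmono, Function.comp_apply]
  rw [← expect_sum_comm, expect_congr rfl fun σ _ => Equiv.sum_comp σ fun i => y i ^ (2 * q)]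
  exact Fintype.expect_const _

lemma walkProb_peaked_le_sum {c : ℝ} (hc : 0 < c) (q t : ℕ) (x : ι → ℝ) :
    walkProb t (peaked ι c) x ≤ (Fintype.card ι / c) ^ q *
      ∑ i, (oraOperator ι ^ t) (permMean (evenMonomial (Pi.single i q))) x := by
  have hle : (oraOperator ι ^ t) ((peaked ι c).indicator 1) x ≤ (oraOperator ι ^ t)
      ((Fintype.card ι / c : ℝ) ^ q • ∑ i, permMean (evenMonomial (Pi.single i q))) x := by
    refine oraOperator_pow_mono (fun y _ => ?_) t rfl
    rw [Pi.smul_apply, Finset.sum_apply, sum_permMean_evenMonomial_single, smul_eq_mul]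
    exact indicator_peaked_le hc q y
  rwa [map_smul, map_sum, Pi.smul_apply, Finset.sum_apply, smul_eq_mul] at hle

lemma exp_pow_mul_one_sub_inv_pow_le_one {d l : ℝ} {q t : ℕ} (hd : 1 ≤ d)
    (ht : 64 * d * (q * l) ≤ t) : rexp l ^ q * (1 - 1 / (64 * d)) ^ t ≤ 1 := by
  have h0 : 0 ≤ 1 - 1 / (64 * d) := sub_nonneg.2 <| (div_le_one (by positivity)).2 (by linarith)
  calc rexp l ^ q * (1 - 1 / (64 * d)) ^ t
      ≤ rexp l ^ q * rexp (-(1 / (64 * d))) ^ t := by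
        gcongr
        exact Real.one_sub_le_exp_neg _
    _ = rexp (q * l - t / (64 * d)) := by
        rw [← Real.exp_nat_mul, ← Real.exp_nat_mul, ← Real.exp_add]
        ring_nf
    _ ≤ 1 := Real.exp_le_one_iff.2 <| sub_nonpos.2 <| (le_div_iff₀' (by positivity)).2 ht

lemma weightProd_single (i : ι) (q : ℕ) : weightProd (Pi.single i q) = weight q := by
  rw [weightProd, prod_eq_single i (fun k _ hk => by simp [hk, weight]) (by simp),
    Pi.single_eq_same]

lemma walkProb_peaked_le {x : ι → ℝ} {l c : ℝ} {q t : ℕ} (hx : ∑ i, x i ^ 2 = 1)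
    (hxl : x ∉ peaked ι (rexp l)) (hc : 0 < c) (hq : q ≠ 0)
    (hcard : 2 ^ (q + 3) ≤ Fintype.card ι) (ht : 64 * Fintype.card ι * (q * l) ≤ t) :
    walkProb t (peaked ι c) x ≤ Fintype.card ι * (2 * q / c) ^ q := by
  set d := Fintype.card ι
  have hd : 0 < d := Nat.lt_of_lt_of_le (by positivity) hcard
  have hd1 : (1 : ℝ) ≤ d := by exact_mod_cast hd
  have hxl : ∀ i, x i ^ 2 ≤ rexp l / d := fun i => (not_le.1 (not_exists.1 hxl i)).le
  have hmoment : ∀ i, (oraOperator ι ^ t) (permMean (evenMonomial (Pi.single i q))) x ≤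
      2 / d ^ q * weight q := by
    intro i
    refine (oraOperator_pow_permMean_evenMonomial_le hx hxl t hcard (by simp)).trans ?_
    rw [weightProd_single]
    have := one_le_weight q
    gcongr
    linarith [exp_pow_mul_one_sub_inv_pow_le_one hd1 ht]
  calc walkProb t (peaked ι c) x
      ≤ (d / c) ^ q * ∑ i : ι, 2 / d ^ q * weight q :=
        (walkProb_peaked_le_sum hc q t x).trans (by gcongr with i; exact hmoment i)
    _ = d * (2 * weight q / c ^ q) := by
        rw [sum_const, card_univ, nsmul_eq_mul, div_pow]
        field_simp
        exact mul_comm _ _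
    _ ≤ d * ((2 * q) ^ q / c ^ q) := by
        rw [weight, if_neg hq, mul_div_cancel₀ _ two_ne_zero]
        gcongr
        exact evenMoment_le_pow q
    _ = d * (2 * q / c) ^ q := by rw [div_pow]

end Walk

section Levels

variable {ι : Type*} [Fintype ι] [DecidableEq ι]

omit [DecidableEq ι] in
lemma notMem_peaked_of_card_lt {c : ℝ} (hc : Fintype.card ι < c) {y : ι → ℝ}
    (hy : ∑ i, y i ^ 2 = 1) : y ∉ peaked ι c := by
  rintro ⟨i, hi⟩
  have : Nonempty ι := ⟨i⟩
  have hd : (0 : ℝ) < Fintype.card ι := by exact_mod_cast Fintype.card_pos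
  have hle : y i ^ 2 ≤ 1 :=
    (Finset.single_le_sum (fun j _ => sq_nonneg (y j)) (Finset.mem_univ i)).trans hy.le
  exact hc.not_ge ((div_le_one hd).1 (hi.trans hle))

lemma walkProb_peaked_of_card_lt {c : ℝ} (hc : Fintype.card ι < c) (t : ℕ) {x : ι → ℝ}
    (hx : ∑ i, x i ^ 2 = 1) : walkProb t (peaked ι c) x = 0 :=
  walkProb_eq_zero (fun _ hy => notMem_peaked_of_card_lt hc hy) t hx

lemma lt_hundred_mul_log {d : ℕ} (h2 : 2 ≤ d) (h600 : d ≤ 600) :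
    (d : ℝ) < 100 * Real.log d := by
  have of_two_pow_le (k : ℕ) (hk : 2 ^ k ≤ d) (hdk : d < 69 * k) : (d : ℝ) < 100 * Real.log d := by
    have hlog : k * Real.log 2 ≤ Real.log d := by
      rw [← Real.log_pow]
      exact Real.log_le_log (by positivity) (by exact_mod_cast hk)
    have hdk : (d : ℝ) < 69 * k := by exact_mod_cast hdk
    nlinarith [Real.log_two_gt_d9, (Nat.cast_nonneg k : (0 : ℝ) ≤ k)]
  rcases Nat.lt_or_ge d 64 with h64 | h64
  · exact of_two_pow_le 1 (by lia) (by lia)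
  rcases Nat.lt_or_ge d 256 with h256 | h256
  · exact of_two_pow_le 6 (by lia) (by lia)
  rcases Nat.lt_or_ge d 512 with h512 | h512
  · exact of_two_pow_le 8 (by lia) (by lia)
  · exact of_two_pow_le 9 (by lia) (by lia)

lemma six_le_log {d : ℕ} (hd : 600 ≤ d) : 6 ≤ Real.log d := by
  have hd' : (600 : ℝ) ≤ d := by exact_mod_cast hd
  rw [Real.le_log_iff_exp_le (by linarith)]
  calc rexp 6 = rexp 1 ^ 6 := by rw [← Real.exp_nat_mul]; norm_num
    _ ≤ 2.72 ^ 6 := by gcongr; linarith [Real.exp_one_lt_d9]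
    _ ≤ d := by linarith

lemma two_pow_add_three_le {d q : ℕ} (hd : 600 ≤ d) (hq : q ≤ Real.log d) : 2 ^ (q + 3) ≤ d := by
  rcases le_or_gt q 6 with h6 | h6
  · calc 2 ^ (q + 3) ≤ 2 ^ 9 := by gcongr <;> lia
      _ ≤ d := by lia
  · suffices h : (2 : ℝ) ^ (q + 3) ≤ d by exact_mod_cast h
    calc (2 : ℝ) ^ (q + 3) = 2 ^ q * 8 := by ring
      _ ≤ 2 ^ q * 1.35 ^ 7 := by gcongr; norm_num
      _ ≤ 2 ^ q * 1.35 ^ q := by gcongr <;> [norm_num; lia]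
      _ = 2.7 ^ q := by rw [← mul_pow]; norm_num
      _ ≤ rexp 1 ^ q := by gcongr; linarith [Real.exp_one_gt_d9]
      _ = rexp q := by rw [← Real.exp_nat_mul, mul_one]
      _ ≤ d := (Real.le_log_iff_exp_le (by norm_cast; lia)).1 hq

lemma eight_mul_log_le {d : ℕ} (hd : 600 ≤ d) : 8 * Real.log d ≤ d := by
  have hpow := two_pow_add_three_le hd (Nat.floor_le (by linarith [six_le_log hd]))
  have hfloor : ⌊Real.log d⌋₊ + 1 ≤ 2 ^ ⌊Real.log d⌋₊ := Nat.lt_two_pow_self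
  have hnat : 8 * (⌊Real.log d⌋₊ + 1) ≤ d := by rw [pow_add] at hpow; lia
  have hreal : 8 * ((⌊Real.log d⌋₊ : ℝ) + 1) ≤ d := by exact_mod_cast hnat
  linarith [Nat.lt_floor_add_one (Real.log d)]

lemma two_mul_cube_le_fifty_pow_floor_log {d : ℕ} (hd : 600 ≤ d) :
    2 * (d : ℝ) ^ 3 ≤ 50 ^ ⌊Real.log d⌋₊ := by
  have hq : 6 ≤ ⌊Real.log d⌋₊ := Nat.le_floor (by exact_mod_cast six_le_log hd)
  have hd0 : (0 : ℝ) < d := by norm_cast; lia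
  set q := ⌊Real.log d⌋₊
  have hexp : rexp 3 ≤ 20.2 := by
    calc rexp 3 = rexp 1 ^ 3 := by rw [← Real.exp_nat_mul]; norm_num
      _ ≤ 2.72 ^ 3 := by gcongr; linarith [Real.exp_one_lt_d9]
      _ ≤ 20.2 := by norm_num
  calc 2 * (d : ℝ) ^ 3 = 2 * rexp (3 * Real.log d) := by
        rw [← Real.log_rpow hd0, Real.exp_log (by positivity)]; norm_cast
    _ ≤ 2 * rexp (3 * (q + 1)) := by gcongr; exact (Nat.lt_floor_add_one _).le
    _ = 2 * rexp 3 ^ (q + 1) := by rw [← Real.exp_nat_mul]; push_cast; ring_nf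
    _ ≤ 2 * 20.2 ^ (q + 1) := by gcongr
    _ = 40.4 * 20.2 ^ q := by ring
    _ ≤ 2.4 ^ 6 * 20.2 ^ q := by gcongr; norm_num
    _ ≤ 2.4 ^ q * 20.2 ^ q := by gcongr; norm_num
    _ = 48.48 ^ q := by rw [← mul_pow]; norm_num
    _ ≤ 50 ^ q := by gcongr; norm_num

lemma walkProb_peaked_hundred_mul_log_le (hd : 600 ≤ Fintype.card ι) {x : ι → ℝ}
    (hx : ∑ i, x i ^ 2 = 1) {l : ℝ} (hl : 0 ≤ l) (hxl : x ∉ peaked ι (rexp l)) {t : ℕ}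
    (ht : 64 * Fintype.card ι * (Real.log (Fintype.card ι) * l) ≤ t) :
    walkProb t (peaked ι (100 * Real.log (Fintype.card ι))) x ≤
      1 / (2 * (Fintype.card ι : ℝ) ^ 2) := by
  set d := Fintype.card ι
  have hlog : 6 ≤ Real.log d := six_le_log hd
  have : (0 : ℝ) < d := by norm_cast; lia
  have hcube := two_mul_cube_le_fifty_pow_floor_log hd
  have hq0 : ⌊Real.log d⌋₊ ≠ 0 := (Nat.floor_pos.2 (by linarith)).ne'
  have hqle : ⌊Real.log d⌋₊ ≤ Real.log d := Nat.floor_le (by linarith)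
  set q := ⌊Real.log d⌋₊
  have hratio : 2 * q / (100 * Real.log d) ≤ 1 / 50 := by
    rw [div_le_div_iff₀ (by linarith) (by norm_num)]
    linarith
  calc walkProb t (peaked ι (100 * Real.log d)) x
      ≤ d * (2 * q / (100 * Real.log d)) ^ q :=
        walkProb_peaked_le hx hxl (by linarith) hq0 (two_pow_add_three_le hd hqle)
          (le_trans (by gcongr) ht)
    _ ≤ d * (1 / 50) ^ q := by gcongr
    _ = d / 50 ^ q := by rw [one_div, inv_pow, div_eq_mul_inv]
    _ ≤ d / (2 * d ^ 3) := by gcongr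
    _ = 1 / (2 * d ^ 2) := by field_simp

lemma walkProb_peaked_exp_half_le (hd : 600 ≤ Fintype.card ι) {x : ι → ℝ}
    (hx : ∑ i, x i ^ 2 = 1) {l : ℝ} (hl : 16 ≤ l) (hxl : x ∉ peaked ι (rexp l)) {t : ℕ}
    (ht : 64 * Fintype.card ι * (8 * Real.log (Fintype.card ι) + l) ≤ t) :
    walkProb t (peaked ι (rexp (l / 2 + 8) * Real.log (Fintype.card ι))) x ≤
      1 / (Fintype.card ι : ℝ) ^ 3 := by
  set d := Fintype.card ι
  have hlog : 6 ≤ Real.log d := six_le_log hd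
  have hd0 : (0 : ℝ) < d := by norm_cast; lia
  set q := ⌈8 * Real.log d / l⌉₊
  have hq0 : q ≠ 0 := (Nat.ceil_pos.2 (by positivity)).ne'
  have hq_lt : q < 8 * Real.log d / l + 1 := Nat.ceil_lt_add_one (by positivity)
  have hle_ql : 8 * Real.log d ≤ q * l := (div_le_iff₀ (by linarith)).1 (Nat.le_ceil _)
  have hql_le : q * l ≤ 8 * Real.log d + l := by
    calc q * l ≤ (8 * Real.log d / l + 1) * l := by gcongr
      _ = 8 * Real.log d + l := by field_simp
  have hqlog : q ≤ Real.log d := by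
    have : 8 * Real.log d / l ≤ Real.log d / 2 := by
      rw [div_le_div_iff₀ (by linarith) two_pos]
      nlinarith
    linarith
  have hratio : 2 * q / (rexp (l / 2 + 8) * Real.log d) ≤ rexp (-(l / 2)) := by
    rw [div_le_iff₀ (by positivity), ← mul_assoc, ← Real.exp_add, neg_add_cancel_left]
    gcongr
    linarith [Real.add_one_le_exp 8]
  calc walkProb t (peaked ι (rexp (l / 2 + 8) * Real.log d)) x
      ≤ d * (2 * q / (rexp (l / 2 + 8) * Real.log d)) ^ q :=
        walkProb_peaked_le hx hxl (by positivity) hq0 (two_pow_add_three_le hd hqlog)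
          (le_trans (by gcongr) ht)
    _ ≤ d * rexp (-(l / 2)) ^ q := by gcongr
    _ = d * rexp (-(q * l / 2)) := by rw [← Real.exp_nat_mul]; ring_nf
    _ ≤ d * rexp (-(4 * Real.log d)) := by gcongr; linarith
    _ = 1 / d ^ 3 := by
        rw [Real.exp_neg, ← Real.log_rpow hd0, Real.exp_log (by positivity)]
        rw [Real.rpow_ofNat]
        field_simp

/-- The exponents of the successive flatness thresholds: with high probability, after `k` rounds
the walk in dimension `d` is outside `peaked _ (rexp (flatExponent d k))`. They solve the recursion
`l ↦ l / 2 + 8 + log (log d)` of `walkProb_peaked_exp_half_le`. -/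
def flatExponent (d k : ℕ) : ℝ := Real.log d / 2 ^ k + 16 + 2 * Real.log (Real.log d)

lemma exp_flatExponent_succ {d : ℕ} (hd : 0 < Real.log d) (k : ℕ) :
    rexp (flatExponent d (k + 1)) = rexp (flatExponent d k / 2 + 8) * Real.log d := by
  rw [← Real.exp_log hd, ← Real.exp_add, flatExponent, flatExponent]
  ring_nf

lemma one_le_log_log {d : ℕ} (hd : 600 ≤ d) : 1 ≤ Real.log (Real.log d) := by
  have := six_le_log hd
  rw [Real.le_log_iff_exp_le (by linarith)]
  linarith [Real.exp_one_lt_d9]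

lemma flatExponent_le {d : ℕ} (hd : 600 ≤ d) (k : ℕ) : flatExponent d k ≤ 6 * Real.log d := by
  have hlog := six_le_log hd
  have hdiv : Real.log d / 2 ^ k ≤ Real.log d :=
    div_le_self (by linarith) (one_le_pow₀ one_le_two)
  rw [flatExponent]
  linarith [Real.log_le_self (x := Real.log d) (by linarith)]

lemma flatExponent_le_of_two_mul_log_log_le {d k : ℕ} (hd : 600 ≤ d)
    (hk : 2 * Real.log (Real.log d) ≤ k) : flatExponent d k ≤ 19 * Real.log (Real.log d) := by
  have hlog := six_le_log hd
  have hloglog := one_le_log_log hd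
  have hpow : Real.log d ≤ 2 ^ k := by
    rw [← Real.log_le_log_iff (by linarith) (by positivity), Real.log_pow]
    nlinarith [Real.log_two_gt_d9]
  have hdiv : Real.log d / 2 ^ k ≤ 1 := (div_le_one (by positivity)).2 hpow
  rw [flatExponent]
  linarith

lemma walkProb_mul_peaked_flatExponent_le (hd : 600 ≤ Fintype.card ι) {T : ℕ}
    (hT : 896 * Fintype.card ι * Real.log (Fintype.card ι) ≤ T) {x : ι → ℝ}
    (hx : ∑ i, x i ^ 2 = 1) (k : ℕ) :
    walkProb (k * T) (peaked ι (rexp (flatExponent (Fintype.card ι) k))) x ≤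
      k / (Fintype.card ι : ℝ) ^ 3 := by
  have : Nontrivial ι := Fintype.one_lt_card_iff_nontrivial.1 (by lia)
  set d := Fintype.card ι with hd_def
  have hlog := six_le_log hd
  have hloglog := one_le_log_log hd
  have hd0 : (0 : ℝ) < d := by norm_cast; lia
  induction k with
  | zero =>
    refine (walkProb_peaked_of_card_lt ?_ _ hx).trans_le (by simp)
    rw [← hd_def, ← Real.log_lt_iff_lt_exp hd0, flatExponent, pow_zero, div_one]
    linarith
  | succ k ih =>
    have h16 : 16 ≤ flatExponent d k := by
      have : 0 ≤ Real.log d / 2 ^ k := by positivity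
      rw [flatExponent]
      linarith
    have htime : 64 * d * (8 * Real.log d + flatExponent d k) ≤ T := by
      calc 64 * d * (8 * Real.log d + flatExponent d k)
          ≤ 64 * d * (8 * Real.log d + 6 * Real.log d) := by gcongr; exact flatExponent_le hd k
        _ = 896 * d * Real.log d := by ring
        _ ≤ T := hT
    rw [exp_flatExponent_succ (by linarith), Nat.succ_mul, Nat.cast_succ, add_div]
    exact (walkProb_add_le (by positivity)
      (fun y hyl hy => walkProb_peaked_exp_half_le hd hy h16 hyl htime) _ hx).trans (by gcongr)

lemma walkProb_peaked_hundred_mul_log_le_of_large (hd : 600 ≤ Fintype.card ι) {x : ι → ℝ}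
    (hx : ∑ i, x i ^ 2 = 1) {t : ℕ}
    (ht : 4000 * Fintype.card ι * Real.log (Fintype.card ι) *
      Real.log (Real.log (Fintype.card ι)) ≤ t) :
    walkProb t (peaked ι (100 * Real.log (Fintype.card ι))) x ≤ 1 / (Fintype.card ι : ℝ) ^ 2 := by
  have : Nontrivial ι := Fintype.one_lt_card_iff_nontrivial.1 (by lia)
  set d := Fintype.card ι
  set L := Real.log (Real.log d)
  have hlog := six_le_log hd
  have hL : 1 ≤ L := one_le_log_log hd
  have hd0 : (600 : ℝ) ≤ d := by exact_mod_cast hd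
  have hdlog : 1 ≤ d * Real.log d := by nlinarith
  set K := ⌈2 * L⌉₊
  set T := ⌈896 * d * Real.log d⌉₊
  have hK : K ≤ 3 * L := by linarith [Nat.ceil_lt_add_one (a := 2 * L) (by positivity)]
  have hT : T ≤ 897 * (d * Real.log d) := by
    linarith [Nat.ceil_lt_add_one (a := 896 * d * Real.log d) (by positivity)]
  have hKT : (K * T : ℝ) ≤ 2691 * (d * Real.log d * L) := by
    calc (K * T : ℝ) ≤ 3 * L * (897 * (d * Real.log d)) := by gcongr
      _ = 2691 * (d * Real.log d * L) := by ring
  have : 0 ≤ d * Real.log d * L := by positivity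
  obtain ⟨s, rfl⟩ : ∃ s, t = K * T + s := Nat.exists_eq_add_of_le <| by
    have : (K * T : ℝ) ≤ t := by linarith
    exact_mod_cast this
  have hflat := flatExponent_le_of_two_mul_log_log_le hd (Nat.le_ceil (2 * L))
  have hflat0 : 0 ≤ flatExponent d K := by rw [flatExponent]; positivity
  have hs : 64 * d * (Real.log d * flatExponent d K) ≤ s := by
    calc 64 * d * (Real.log d * flatExponent d K) ≤ 64 * d * (Real.log d * (19 * L)) := by gcongr
      _ ≤ s := by push_cast at ht; linarith
  have hK_le : (K : ℝ) ≤ d / 2 := by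
    linarith [eight_mul_log_le hd, Real.log_le_self (x := Real.log d) (by linarith)]
  calc walkProb (K * T + s) (peaked ι (100 * Real.log d)) x
      ≤ walkProb (K * T) (peaked ι (rexp (flatExponent d K))) x + 1 / (2 * d ^ 2) :=
        walkProb_add_le (by positivity)
          (fun y hyl hy => walkProb_peaked_hundred_mul_log_le hd hy hflat0 hyl hs) _ hx
    _ ≤ d / 2 / d ^ 3 + 1 / (2 * d ^ 2) := by
        gcongr
        exact (walkProb_mul_peaked_flatExponent_le hd (Nat.le_ceil _) hx K).trans (by gcongr)
    _ = 1 / d ^ 2 := by field_simp; norm_num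

lemma walkProb_peaked_hundred_mul_log_le_one_div_sq [Nontrivial ι] {x : ι → ℝ}
    (hx : ∑ i, x i ^ 2 = 1) {t : ℕ}
    (ht : 4000 * Fintype.card ι * Real.log (Fintype.card ι) *
      Real.log (Real.log (Fintype.card ι)) ≤ t) :
    walkProb t (peaked ι (100 * Real.log (Fintype.card ι))) x ≤ 1 / (Fintype.card ι : ℝ) ^ 2 := by
  rcases le_total (Fintype.card ι) 600 with hd | hd
  · rw [walkProb_peaked_of_card_lt (lt_hundred_mul_log Fintype.one_lt_card hd) t hx]
    positivity
  · exact walkProb_peaked_hundred_mul_log_le_of_large hd hx ht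

end Levels

section Measure

lemma coe_univ_offDiag {ι : Type*} [Fintype ι] :
    ((Finset.univ : Finset ι).offDiag : Set (ι × ι)) = {p | p.1 ≠ p.2} := by
  ext p
  simp

lemma card_offDiag_fin (d : ℕ) : (Finset.univ : Finset (Fin d)).offDiag.card = d * (d - 1) := by
  rw [Finset.offDiag_card, Finset.card_univ, Fintype.card_fin, Nat.mul_sub_one]

lemma pairUniform_univ_le_one (d : ℕ) : pairUniform d Set.univ ≤ 1 := by
  rw [pairUniform, ← coe_univ_offDiag, Measure.smul_apply, Measure.restrict_apply_univ,
    Measure.count_apply_finset, card_offDiag_fin, smul_eq_mul]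
  exact ENNReal.inv_mul_le_one _

instance isFiniteMeasure_pairUniform (d : ℕ) : IsFiniteMeasure (pairUniform d) :=
  ⟨(pairUniform_univ_le_one d).trans_lt ENNReal.one_lt_top⟩

lemma integral_pairUniform (d : ℕ) (f : Fin d × Fin d → ℝ) :
    ∫ p, f p ∂pairUniform d = 𝔼 p ∈ (Finset.univ : Finset (Fin d)).offDiag, f p := by
  rw [pairUniform, ← coe_univ_offDiag, integral_smul_measure,
    setIntegral_finset _ (Integrable.of_finite).integrableOn, Finset.expect_eq_sum_div_card,
    card_offDiag_fin, div_eq_inv_mul, ENNReal.toReal_inv, ENNReal.toReal_natCast, smul_eq_mul]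
  simp only [count_real_singleton, one_smul]

lemma rotM_pi_div_four_mulVec {d : ℕ} {p : Fin d × Fin d} (hp : p.1 ≠ p.2) (x : Fin d → ℝ) :
    (rotM d p.1 p.2 (π / 4)).mulVec x = eighthTurn p x := by
  have htrig : √2 / 2 = (√2)⁻¹ := by rw [Real.sqrt_div_self', one_div]
  have hfst_fst : rotM d p.1 p.2 (π / 4) p.1 p.1 = (√2)⁻¹ := by simp [rotM, htrig]
  have hfst_snd : rotM d p.1 p.2 (π / 4) p.1 p.2 = -(√2)⁻¹ := by simp [rotM, hp.symm, htrig]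
  have hsnd_fst : rotM d p.1 p.2 (π / 4) p.2 p.1 = (√2)⁻¹ := by simp [rotM, hp, hp.symm, htrig]
  have hsnd_snd : rotM d p.1 p.2 (π / 4) p.2 p.2 = (√2)⁻¹ := by simp [rotM, hp.symm, htrig]
  ext k
  rw [Matrix.mulVec, dotProduct]
  rcases eq_or_ne k p.1 with rfl | h₁
  · rw [eighthTurn, updatePair_fst hp, Fintype.sum_eq_add p.1 p.2 hp fun l hl => by
      simp [rotM, hp, hl.1, hl.2, hl.1.symm], hfst_fst, hfst_snd]
    ring
  rcases eq_or_ne k p.2 with rfl | h₂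
  · rw [eighthTurn, updatePair_snd, Fintype.sum_eq_add p.1 p.2 hp fun l hl => by
      simp [rotM, hp.symm, hl.1, hl.2, hl.2.symm], hsnd_fst, hsnd_snd]
    ring
  · rw [eighthTurn, updatePair_of_ne h₁ h₂, Fintype.sum_eq_single k fun l hl => by
      simp [rotM, h₁, h₂, hl.symm]]
    simp [rotM, h₁, h₂]

lemma oraMatrix_cons_mulVec {d t : ℕ} (p : Fin d × Fin d) (ω : Fin t → Fin d × Fin d)
    (x : Fin d → ℝ) :
    (oraMatrix (Fin.cons p ω : Fin (t + 1) → Fin d × Fin d)).mulVec x =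
      (oraMatrix ω).mulVec ((rotM d p.1 p.2 (π / 4)).mulVec x) := by
  rw [oraMatrix, oraMatrix, List.ofFn_succ, List.reverse_cons, List.prod_append,
    Matrix.mulVec_mulVec]
  simp only [List.prod_singleton, Fin.cons_zero, Fin.cons_succ]

lemma integral_oraMatrix_mulVec {d : ℕ} (t : ℕ) (f : (Fin d → ℝ) → ℝ) (x : Fin d → ℝ) :
    ∫ ω, f ((oraMatrix ω).mulVec x) ∂(Measure.pi fun _ : Fin t => pairUniform d) =
      (oraOperator (Fin d) ^ t) f x := by
  induction t generalizing x with
  | zero => simp [oraMatrix, measureReal_def]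
  | succ t ih =>
    have hcons (q : (Fin d × Fin d) × (Fin t → Fin d × Fin d)) :
        (MeasurableEquiv.piFinSuccAbove (fun _ => Fin d × Fin d) 0).symm q = Fin.cons q.1 q.2 :=
      Fin.insertNth_zero' _ _
    rw [← (measurePreserving_piFinSuccAbove (fun _ => pairUniform d) 0).symm.integral_comp']
    simp only [hcons, oraMatrix_cons_mulVec]
    rw [integral_prod _ Integrable.of_finite, oraOperator_pow_succ_apply]
    simp only [ih, integral_pairUniform]
    refine Finset.expect_congr rfl fun p hp => ?_
    rw [rotM_pi_div_four_mulVec (Finset.mem_offDiag.1 hp).2.2]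

lemma measure_oraMatrix_mulVec_mem {d : ℕ} (t : ℕ) (s : Set (Fin d → ℝ)) (x : Fin d → ℝ) :
    (Measure.pi fun _ : Fin t => pairUniform d) {ω | (oraMatrix ω).mulVec x ∈ s} =
      ENNReal.ofReal (walkProb t s x) := by
  rw [walkProb, ← integral_oraMatrix_mulVec, ← ofReal_measureReal,
    ← integral_indicator_one (Set.toFinite _).measurableSet]
  rfl

lemma mem_peaked_sq_mul {ι : Type*} [Fintype ι] {a : ℝ} (ha : 0 ≤ a) {c : ℝ} {y : ι → ℝ} :
    y ∈ peaked ι (a ^ 2 * c) ↔ ∃ i, a * √(c / Fintype.card ι) ≤ |y i| := by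
  refine exists_congr fun i => ?_
  rw [← Real.sqrt_sq_eq_abs, ← Real.sqrt_sq ha, ← Real.sqrt_mul (sq_nonneg _),
    Real.sqrt_le_sqrt_iff (sq_nonneg _), Real.sqrt_sq ha, mul_div_assoc]

end Measure

/-- **Proposition 4.4**: with probability at least `1 - d⁻²`, after
`C d (log d)(log log d)` steps of orthogonal repeated averaging all coordinates of the image
of a fixed unit vector are of size `O(√(log d / d))`. -/
theorem ora_max_coord :
    ∃ C : ℝ, 0 < C ∧
      ∀ (d : ℕ) (x : Fin d → ℝ), (∑ i, x i ^ 2 = 1) →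
      ∀ t : ℕ, C * d * Real.log d * Real.log (Real.log d) ≤ t →
      (Measure.pi fun _ : Fin t => pairUniform d)
          {ω : Fin t → Fin d × Fin d |
            ∃ i : Fin d, 10 * Real.sqrt (Real.log d / d) ≤ |(oraMatrix ω).mulVec x i|} ≤
        (((d : ℝ≥0∞)) ^ 2)⁻¹ := by
  refine ⟨4000, by norm_num, fun d x hx t ht => ?_⟩
  obtain rfl | rfl | hd : d = 0 ∨ d = 1 ∨ 2 ≤ d := by lia
  · simp at hx
  · refine (measure_mono (Set.subset_univ _)).trans ?_
    simpa [Measure.pi_univ] using pow_le_one' (pairUniform_univ_le_one 1) t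
  have : Nontrivial (Fin d) := Fin.nontrivial_iff_two_le.2 hd
  have hpeaked (y : Fin d → ℝ) : (∃ i, 10 * √(Real.log d / d) ≤ |y i|) ↔
      y ∈ peaked (Fin d) (100 * Real.log d) := by
    rw [show (100 : ℝ) = 10 ^ 2 by norm_num, mem_peaked_sq_mul (by norm_num), Fintype.card_fin]
  have hbound := walkProb_peaked_hundred_mul_log_le_one_div_sq hx (by simpa using ht)
  rw [Fintype.card_fin] at hbound
  simp only [hpeaked]
  calc (Measure.pi fun _ : Fin t => pairUniform d)
        {ω | (oraMatrix ω).mulVec x ∈ peaked (Fin d) (100 * Real.log d)}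
      = ENNReal.ofReal (walkProb t (peaked (Fin d) (100 * Real.log d)) x) :=
        measure_oraMatrix_mulVec_mem t _ x
    _ ≤ ENNReal.ofReal (1 / d ^ 2) := ENNReal.ofReal_le_ofReal hbound
    _ = ((d : ℝ≥0∞) ^ 2)⁻¹ := by
        rw [one_div, ENNReal.ofReal_inv_of_pos (by positivity), ENNReal.ofReal_pow d.cast_nonneg,
          ENNReal.ofReal_natCast]

end KacJL
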